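/- arXiv:2601.18003 — 2 statements merged into one kernel-verified Lean document; each statement's English description precedes it below -/
import Mathlib

section
/- Let γ be a Frenet curve in M³(C) with frame (T,N,B), curvature κ > 0 and torsion τ nowhere zero, and let p₀ ∈ ℝ⁴ be such that λ := ⟨N(s),p₀⟩ is a nonzero constant, b(s) := ⟨B(s),p₀⟩ is nowhere zero, and a/b is constant, where a(s) := ⟨T(s),p₀⟩. Set μ(s) = −C⟨p₀,γ(s)⟩ and ρ(s) = τ(s)/κ(s). Then ρ is a constant, κ(s) = −μ(s)/(λ(1+ρ²)) and τ(s) = ρ·κ(s) for all s, and μ satisfies the differential equation μ''(s) + C·(ρ²/(1+ρ²))·μ(s) = 0. -/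
/-! Pair the Frenet equations with `p₀` and write `g = ⟨γ, p₀⟩`, `a = ⟨T, p₀⟩`, `b = ⟨B, p₀⟩`,
`C = ε / R²`. Since `⟨N, p₀⟩ = lam` is constant, `N' = -κT + τB` gives `κ a = τ b`, so the constant
`ρ = a / b` is also `τ / κ`. Differentiating `a = ρ b` with `a' = -C g + κ lam` and `b' = -τ lam`
gives `C g = lam (1 + ρ²) κ`, which is the formula for `κ` since `μ = -C g`; substituting it back
into `μ'' = -C a' = C ρ² κ lam` yields the differential equation. -/

/-- The bilinear form ⟨x,y⟩ = ε x₁y₁ + x₂y₂ + ⋯ on ℝ^m. -/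
noncomputable def form (ε : ℝ) {m : ℕ} [NeZero m] (x y : Fin m → ℝ) : ℝ :=
  (ε - 1) * (x 0 * y 0) + ∑ i, x i * y i

theorem form_symm (ε : ℝ) {m : ℕ} [NeZero m] (x y : Fin m → ℝ) : form ε x y = form ε y x := by
  simp only [form, mul_comm]

theorem form_add_left (ε : ℝ) {m : ℕ} [NeZero m] (x y p : Fin m → ℝ) :
    form ε (x + y) p = form ε x p + form ε y p := by
  simp only [form, Pi.add_apply, add_mul, Finset.sum_add_distrib]
  ring

theorem form_smul_left (ε c : ℝ) {m : ℕ} [NeZero m] (x p : Fin m → ℝ) :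
    form ε (c • x) p = c * form ε x p := by
  simp only [form, Pi.smul_apply, smul_eq_mul, mul_assoc, mul_add, Finset.mul_sum]
  ring

theorem hasDerivAt_form_left (ε : ℝ) {m : ℕ} [NeZero m] {f : ℝ → Fin m → ℝ} {f' : Fin m → ℝ}
    {s : ℝ} (p : Fin m → ℝ) (h : HasDerivAt f f' s) :
    HasDerivAt (fun u => form ε (f u) p) (form ε f' p) s := by
  have hc := hasDerivAt_pi.1 h
  exact (((hc 0).mul_const (p 0)).const_mul (ε - 1)).add
    (HasDerivAt.fun_sum fun i _ => (hc i).mul_const (p i))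

/-- For a proper concircular helix γ with constant rectifying slope (axis vector p₀,
λ = ⟨N,p₀⟩ a nonzero constant, b = ⟨B,p₀⟩ nowhere zero, a/b constant), the Lancret
curvature ρ = τ/κ is constant, κ = -μ/(λ(1+ρ²)), τ = ρ·κ, and the concircular factor
μ(s) = -C⟨p₀,γ(s)⟩ (whose derivative is μ'(s) = -C⟨p₀,T(s)⟩) satisfies
μ'' + C·(ρ²/(1+ρ²))·μ = 0. -/
theorem proper_concircular_helix_constant_slope_equations
    (ε R : ℝ) (hε : ε = 1 ∨ ε = -1) (hR : 0 < R)
    (I : Set ℝ) (hIo : IsOpen I) (hIc : IsPreconnected I)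
    (γ T N B : ℝ → Fin 4 → ℝ) (κ τ : ℝ → ℝ)
    (hγs : ContDiffOn ℝ (⊤ : ℕ∞) γ I) (hTs : ContDiffOn ℝ (⊤ : ℕ∞) T I)
    (hNs : ContDiffOn ℝ (⊤ : ℕ∞) N I) (hBs : ContDiffOn ℝ (⊤ : ℕ∞) B I)
    (hκs : ContDiffOn ℝ (⊤ : ℕ∞) κ I) (hτs : ContDiffOn ℝ (⊤ : ℕ∞) τ I)
    (hγM : ∀ s ∈ I, form ε (γ s) (γ s) = 1 / (ε / R ^ 2))
    (hκpos : ∀ s ∈ I, 0 < κ s)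
    (hτ0 : ∀ s ∈ I, τ s ≠ 0)
    (hγ' : ∀ s ∈ I, HasDerivAt γ (T s) s)
    (hTγ : ∀ s ∈ I, form ε (T s) (γ s) = 0)
    (hNγ : ∀ s ∈ I, form ε (N s) (γ s) = 0)
    (hBγ : ∀ s ∈ I, form ε (B s) (γ s) = 0)
    (hTT : ∀ s ∈ I, form ε (T s) (T s) = 1)
    (hNN : ∀ s ∈ I, form ε (N s) (N s) = 1)
    (hBB : ∀ s ∈ I, form ε (B s) (B s) = 1)
    (hTN : ∀ s ∈ I, form ε (T s) (N s) = 0)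
    (hTB : ∀ s ∈ I, form ε (T s) (B s) = 0)
    (hNB : ∀ s ∈ I, form ε (N s) (B s) = 0)
    (hT' : ∀ s ∈ I, HasDerivAt T (-(ε / R ^ 2) • γ s + κ s • N s) s)
    (hN' : ∀ s ∈ I, HasDerivAt N (-(κ s) • T s + τ s • B s) s)
    (hB' : ∀ s ∈ I, HasDerivAt B (-(τ s) • N s) s)
    (p₀ : Fin 4 → ℝ) (lam : ℝ) (hlam : lam ≠ 0)
    (hlamN : ∀ s ∈ I, form ε (N s) p₀ = lam)
    (hb : ∀ s ∈ I, form ε (B s) p₀ ≠ 0)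
    (hslope : ∀ s ∈ I, ∀ s' ∈ I,
      form ε (T s) p₀ / form ε (B s) p₀ = form ε (T s') p₀ / form ε (B s') p₀) :
    ∃ ρ : ℝ,
      (∀ s ∈ I, τ s = ρ * κ s) ∧
      (∀ s ∈ I, κ s = -(-(ε / R ^ 2) * form ε p₀ (γ s)) / (lam * (1 + ρ ^ 2))) ∧
      (∀ s ∈ I, HasDerivAt (fun u => -(ε / R ^ 2) * form ε p₀ (γ u))
        (-(ε / R ^ 2) * form ε p₀ (T s)) s) ∧
      (∀ s ∈ I, HasDerivAt (fun u => -(ε / R ^ 2) * form ε p₀ (T u))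
        (-((ε / R ^ 2) * (ρ ^ 2 / (1 + ρ ^ 2))) * (-(ε / R ^ 2) * form ε p₀ (γ s))) s) := by
  rcases I.eq_empty_or_nonempty with rfl | ⟨s₀, hs₀⟩
  · exact ⟨0, by simp⟩
  set C := ε / R ^ 2
  obtain ⟨ρ, hρ⟩ : ∃ ρ : ℝ, ∀ s ∈ I, form ε (T s) p₀ = ρ * form ε (B s) p₀ :=
    ⟨form ε (T s₀) p₀ / form ε (B s₀) p₀, fun s hs => by
      rw [← hslope s hs s₀ hs₀, div_mul_cancel₀ _ (hb s hs)]⟩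
  have hτ : ∀ s ∈ I, τ s = ρ * κ s := by
    intro s hs
    have h1 := hasDerivAt_form_left ε p₀ (hN' s hs)
    have h2 : HasDerivAt (fun u => form ε (N u) p₀) 0 s :=
      (hasDerivAt_const s lam).congr_of_eventuallyEq
        (Filter.eventuallyEq_of_mem (hIo.mem_nhds hs) hlamN)
    have h3 := h1.unique h2
    rw [form_add_left, form_smul_left, form_smul_left, hρ s hs] at h3
    apply mul_right_cancel₀ (hb s hs)
    linarith
  have ha : ∀ s ∈ I, HasDerivAt (fun u => form ε (T u) p₀)
      (-C * form ε (γ s) p₀ + κ s * lam) s := by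
    intro s hs
    have h1 := hasDerivAt_form_left ε p₀ (hT' s hs)
    rwa [form_add_left, form_smul_left, form_smul_left, hlamN s hs] at h1
  -- Both expressions for `a' = (ρ b)'` agree: `-C g + κ lam = -ρ² κ lam`.
  have key : ∀ s ∈ I, C * form ε (γ s) p₀ = κ s * (lam * (1 + ρ ^ 2)) := by
    intro s hs
    have h1 := (hasDerivAt_form_left ε p₀ (hB' s hs)).const_mul ρ
    rw [form_smul_left, hlamN s hs, hτ s hs] at h1
    have h2 := (ha s hs).unique (h1.congr_of_eventuallyEq
      (Filter.eventuallyEq_of_mem (hIo.mem_nhds hs) hρ))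
    linarith
  have hpos : 1 + ρ ^ 2 ≠ 0 := by positivity
  simp only [form_symm ε p₀]
  refine ⟨ρ, hτ, fun s hs => ?_, fun s hs => ?_, fun s hs => ?_⟩
  · rw [eq_div_iff (mul_ne_zero hlam hpos), ← key s hs]
    ring
  · exact (hasDerivAt_form_left ε p₀ (hγ' s hs)).const_mul _
  · refine ((ha s hs).const_mul (-C)).congr_deriv ?_
    have hk := key s hs
    field_simp
    linear_combination C * hk
end

section
/- Let γ be a Frenet curve in M³(C) with frame (T,N,B), curvature κ > 0 and torsion τ nowhere zero (a nonplanar curve). Then γ is a proper concircular helix — i.e. there exists p₀ ∈ ℝ⁴ such that s ↦ ⟨N(s),p₀⟩ is a nonzero constant λ — if and only if there exist a constant λ ≠ 0 and a smooth function μ : I → ℝ satisfying the two differential equations μ''(s) + C·μ(s) = −C·λ·κ(s) and (μ'·κ/τ)'(s) = C·λ·τ(s) for all s ∈ I (where μ'/ρ = μ'κ/τ with ρ = τ/κ). Moreover, in the forward direction one may take μ(s) = −C⟨p₀,γ(s)⟩ and the same constant λ = ⟨N(s),p₀⟩. -/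
theorem form_comm (ε : ℝ) (x y : Fin 4 → ℝ) : form ε x y = form ε y x := by
  simp only [form, mul_comm]

theorem form_add_right (ε : ℝ) (x y z : Fin 4 → ℝ) :
    form ε x (y + z) = form ε x y + form ε x z := by
  simp only [form, Fin.sum_univ_four, Pi.add_apply]
  ring

theorem form_smul_right (ε a : ℝ) (x y : Fin 4 → ℝ) :
    form ε x (a • y) = a * form ε x y := by
  simp only [form, Fin.sum_univ_four, Pi.smul_apply, smul_eq_mul]
  ring

theorem hasDerivAt_form (ε : ℝ) (p : Fin 4 → ℝ) {X : ℝ → Fin 4 → ℝ} {X' : Fin 4 → ℝ} {s : ℝ}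
    (h : HasDerivAt X X' s) : HasDerivAt (fun u => form ε p (X u)) (form ε p X') s := by
  have h' := hasDerivAt_pi.1 h
  unfold form
  exact (((h' 0).const_mul (p 0)).const_mul (ε - 1)).add
    (HasDerivAt.fun_sum fun i _ => (h' i).const_mul (p i))

/-- A nonplanar Frenet curve γ in M³(C) is a proper concircular helix (⟨N,p₀⟩ a nonzero
constant λ for some p₀) if and only if there are a constant λ ≠ 0 and a smooth function
μ with μ'' + C·μ = -C·λ·κ and (μ'·κ/τ)' = C·λ·τ on I. Moreover, in the forward
direction one may take μ(s) = -C⟨p₀,γ(s)⟩ (with μ'(s) = -C⟨p₀,T(s)⟩) and the same λ. -/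
theorem proper_concircular_helix_iff_ode
    (ε R : ℝ) (hε : ε = 1 ∨ ε = -1) (hR : 0 < R)
    (I : Set ℝ) (hIo : IsOpen I) (hIc : IsPreconnected I)
    (γ T N B : ℝ → Fin 4 → ℝ) (κ τ : ℝ → ℝ)
    (hγs : ContDiffOn ℝ (⊤ : ℕ∞) γ I) (hTs : ContDiffOn ℝ (⊤ : ℕ∞) T I)
    (hNs : ContDiffOn ℝ (⊤ : ℕ∞) N I) (hBs : ContDiffOn ℝ (⊤ : ℕ∞) B I)
    (hκs : ContDiffOn ℝ (⊤ : ℕ∞) κ I) (hτs : ContDiffOn ℝ (⊤ : ℕ∞) τ I)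
    (hγM : ∀ s ∈ I, form ε (γ s) (γ s) = 1 / (ε / R ^ 2))
    (hκpos : ∀ s ∈ I, 0 < κ s)
    (hτ0 : ∀ s ∈ I, τ s ≠ 0)
    (hγ' : ∀ s ∈ I, HasDerivAt γ (T s) s)
    (hTγ : ∀ s ∈ I, form ε (T s) (γ s) = 0)
    (hNγ : ∀ s ∈ I, form ε (N s) (γ s) = 0)
    (hBγ : ∀ s ∈ I, form ε (B s) (γ s) = 0)
    (hTT : ∀ s ∈ I, form ε (T s) (T s) = 1)
    (hNN : ∀ s ∈ I, form ε (N s) (N s) = 1)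
    (hBB : ∀ s ∈ I, form ε (B s) (B s) = 1)
    (hTN : ∀ s ∈ I, form ε (T s) (N s) = 0)
    (hTB : ∀ s ∈ I, form ε (T s) (B s) = 0)
    (hNB : ∀ s ∈ I, form ε (N s) (B s) = 0)
    (hT' : ∀ s ∈ I, HasDerivAt T (-(ε / R ^ 2) • γ s + κ s • N s) s)
    (hN' : ∀ s ∈ I, HasDerivAt N (-(κ s) • T s + τ s • B s) s)
    (hB' : ∀ s ∈ I, HasDerivAt B (-(τ s) • N s) s) :
    ((∃ p₀ : Fin 4 → ℝ, ∃ lam : ℝ, lam ≠ 0 ∧ ∀ s ∈ I, form ε (N s) p₀ = lam) ↔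
      (∃ lam : ℝ, lam ≠ 0 ∧
        ∃ μ μ' : ℝ → ℝ, ContDiffOn ℝ (⊤ : ℕ∞) μ I ∧
          (∀ s ∈ I, HasDerivAt μ (μ' s) s) ∧
          (∀ s ∈ I, HasDerivAt μ'
            (-((ε / R ^ 2) * μ s) - (ε / R ^ 2) * lam * κ s) s) ∧
          (∀ s ∈ I, HasDerivAt (fun u => μ' u * κ u / τ u)
            ((ε / R ^ 2) * lam * τ s) s))) ∧
    (∀ p₀ : Fin 4 → ℝ, ∀ lam : ℝ, lam ≠ 0 → (∀ s ∈ I, form ε (N s) p₀ = lam) →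
      (∀ s ∈ I, HasDerivAt (fun u => -(ε / R ^ 2) * form ε p₀ (γ u))
        (-(ε / R ^ 2) * form ε p₀ (T s)) s) ∧
      (∀ s ∈ I, HasDerivAt (fun u => -(ε / R ^ 2) * form ε p₀ (T u))
        (-((ε / R ^ 2) * (-(ε / R ^ 2) * form ε p₀ (γ s))) -
          (ε / R ^ 2) * lam * κ s) s) ∧
      (∀ s ∈ I, HasDerivAt (fun u => (-(ε / R ^ 2) * form ε p₀ (T u)) * κ u / τ u)
        ((ε / R ^ 2) * lam * τ s) s)) := by
  have hC : ε / R ^ 2 ≠ 0 := by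
    have : ε ≠ 0 := by rcases hε with h | h <;> rw [h] <;> norm_num
    positivity
  generalize ε / R ^ 2 = C at *
  have fwd : ∀ p₀ : Fin 4 → ℝ, ∀ lam : ℝ, lam ≠ 0 → (∀ s ∈ I, form ε (N s) p₀ = lam) →
      (∀ s ∈ I, HasDerivAt (fun u => -C * form ε p₀ (γ u)) (-C * form ε p₀ (T s)) s) ∧
      (∀ s ∈ I, HasDerivAt (fun u => -C * form ε p₀ (T u))
        (-(C * (-C * form ε p₀ (γ s))) - C * lam * κ s) s) ∧
      (∀ s ∈ I, HasDerivAt (fun u => (-C * form ε p₀ (T u)) * κ u / τ u)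
        (C * lam * τ s) s) := by
    intro p₀ lam _ hlam
    have hN : ∀ s ∈ I, form ε p₀ (N s) = lam := fun s hs => by rw [form_comm, hlam s hs]
    refine ⟨fun s hs => (hasDerivAt_form ε p₀ (hγ' s hs)).const_mul (-C), fun s hs => ?_,
      fun s hs => ?_⟩
    · refine ((hasDerivAt_form ε p₀ (hT' s hs)).const_mul (-C)).congr_deriv ?_
      rw [form_add_right, form_smul_right, form_smul_right, hN s hs]
      ring
    · have hrel : ∀ u ∈ I, κ u * form ε p₀ (T u) = τ u * form ε p₀ (B u) := by
        intro u hu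
        have h1 := hasDerivAt_form ε p₀ (hN' u hu)
        have h2 : HasDerivAt (fun u => form ε p₀ (N u)) 0 u :=
          (hasDerivAt_const u lam).congr_of_eventuallyEq
            (Filter.eventually_of_mem (hIo.mem_nhds hu) hN)
        have h3 := h1.unique h2
        rw [form_add_right, form_smul_right, form_smul_right] at h3
        linarith
      have h1 := (hasDerivAt_form ε p₀ (hB' s hs)).const_mul (-C)
      rw [form_smul_right, hN s hs] at h1
      have h2 := h1.congr_of_eventuallyEq
        (f₁ := fun u => (-C * form ε p₀ (T u)) * κ u / τ u)
        (Filter.eventually_of_mem (hIo.mem_nhds hs) fun u hu => by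
          change (-C * form ε p₀ (T u)) * κ u / τ u = -C * form ε p₀ (B u)
          rw [div_eq_iff (hτ0 u hu)]
          linear_combination (-C) * hrel u hu)
      refine h2.congr_deriv ?_
      ring
  refine ⟨⟨?_, ?_⟩, fwd⟩
  · rintro ⟨p₀, lam, hl, h⟩
    obtain ⟨h1, h2, h3⟩ := fwd p₀ lam hl h
    refine ⟨lam, hl, _, _, ?_, h1, h2, h3⟩
    have hc := contDiffOn_pi.1 hγs
    unfold form
    exact contDiffOn_const.mul ((contDiffOn_const.mul (contDiffOn_const.mul (hc 0))).add
      (ContDiffOn.sum fun i _ => contDiffOn_const.mul (hc i)))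
  · rintro ⟨lam, hl, μ, μ', -, h1, h2, h3⟩
    let p : ℝ → Fin 4 → ℝ := fun s =>
      (-μ s) • γ s + (-C⁻¹ * μ' s) • T s + lam • N s + (-C⁻¹ * (μ' s * κ s / τ s)) • B s
    have hp : ∀ s ∈ I, HasDerivAt p 0 s := by
      intro s hs
      have ha := (h1 s hs).neg.smul (hγ' s hs)
      have hb := ((h2 s hs).const_mul (-C⁻¹)).smul (hT' s hs)
      have hd := ((h3 s hs).const_mul (-C⁻¹)).smul (hB' s hs)
      refine (((ha.add hb).add ((hN' s hs).const_smul lam)).add hd).congr_deriv ?_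
      have := hτ0 s hs
      ext i
      simp only [Pi.add_apply, Pi.smul_apply, Pi.neg_apply, Pi.zero_apply, smul_eq_mul]
      field_simp
      ring
    obtain ⟨p₀, hp₀⟩ := hIo.exists_is_const_of_deriv_eq_zero hIc
      (fun s hs => (hp s hs).differentiableAt.differentiableWithinAt)
      (fun s hs => (hp s hs).deriv)
    refine ⟨p₀, lam, hl, fun s hs => ?_⟩
    rw [← hp₀ s hs]
    simp only [p, form_add_right, form_smul_right]
    rw [hNγ s hs, hNN s hs, hNB s hs, form_comm ε (N s) (T s), hTN s hs]
    ring
end
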